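/- For every ε > 0 there exists X > 0 such that every fundamental negative discriminant D with |D| ≥ X satisfies L′(1,χ_D) / (log|D| · L(1,χ_D)) ≥ −1/4 − ε; equivalently, liminf over fundamental negative discriminants D with |D| → ∞ of L′(1,χ_D)/(log|D| · L(1,χ_D)) is ≥ −1/4. (Here L(1,χ_D) > 0, so the quotient is well defined.) -/

import Mathlib

/-!
The bound is the convexity case of the classical local method: write `q = |D|`, `L(s) = L(s, χ_D)`,
and consider, on the left half-disc `|z| < 1/2`, `Re z < 0`, the quotient `G(z) = L(1 + z) / L(1 - z)`.
It is holomorphic there because `L` does not vanish on `Re s ≥ 1`, and `|G| = 1` on the imaginary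
axis because `χ_D` is real, so that `L` commutes with complex conjugation. On the arc, with
`x = -Re z`,

* `|L(1 + z)| ≪ (log B + 2) B ^ x`, where `B = √q (1 + log q)` bounds the character sums by the
  Pólya–Vinogradov inequality (`polya_vinogradov`, `norm_LFunction_le`);
* `|1 / L(1 - z)| ≪ 1 / x`, from the Dirichlet series of `1 / L` (`norm_inv_LFunction_le`).

Let `F(z) = G(z) (1 + 4 z²)³ exp ((log B + δ) z)`. On the arc `|1 + 4 z²| = 4 x`, so the cubed factor
absorbs the singularity `1 / x` at the two corners and leaves `x²`, and `x² exp (-δ x) ≪ δ⁻²` absorbs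
`log B + 2` as soon as `δ² ≫ log B + 2`. Hence `|F| ≤ 1` on the boundary, thus inside, by the maximum
principle. As `F 0 = 1`, the derivative `F' 0 = 2 L'(1) / L(1) + log B + δ` has nonnegative real part
(`neg_le_logDeriv_re`). Since `log B ~ (log q) / 2` and `δ = ε log q` is allowed for large `q`, this
gives `L'(1) / L(1) ≥ -(1/4 + ε) log q`.
-/

open Complex UpperHalfPlane NumberField MeasureTheory
open scoped nonZeroDivisors Real

noncomputable section

def IsFundamentalNegDiscriminant (D : ℤ) : Prop :=
  D < 0 ∧ ((D % 4 = 1 ∧ Squarefree D) ∨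
    (D % 4 = 0 ∧ Squarefree (D / 4) ∧ (D / 4 % 4 = 2 ∨ D / 4 % 4 = 3)))

def IsKroneckerChar (D : ℤ) (χ : DirichletCharacter ℂ (Int.natAbs D)) : Prop :=
  (∀ n : ZMod (Int.natAbs D), χ n = 0 ∨ χ n = 1 ∨ χ n = -1) ∧
    χ.IsPrimitive ∧ χ (-1) = -1

/-! ### The Pólya–Vinogradov inequality for real primitive odd characters -/

lemma inv_eq_self_of_real {q : ℕ} [NeZero q] {χ : DirichletCharacter ℂ q}
    (h : ∀ n : ZMod q, χ n = 0 ∨ χ n = 1 ∨ χ n = -1) : χ⁻¹ = χ := by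
  ext a
  rw [MulChar.inv_apply_eq_inv']
  rcases h a with h | h | h <;> rw [h] <;> norm_num

open ZMod in
/-- Applying the discrete Fourier transform twice to `χ` gives `τ(χ)² = χ(-1) q` for real `χ`. -/
lemma norm_gaussSum_of_real {q : ℕ} [NeZero q] {χ : DirichletCharacter ℂ q}
    (h : ∀ n : ZMod q, χ n = 0 ∨ χ n = 1 ∨ χ n = -1) (hp : χ.IsPrimitive)
    (hodd : χ (-1) = -1) : ‖gaussSum χ stdAddChar‖ = √q := by
  have h1 : ZMod.dft χ = fun k => gaussSum χ stdAddChar * χ (-k) := by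
    ext k
    rw [hp.fourierTransform_eq_inv_mul_gaussSum, inv_eq_self_of_real h, mul_comm]
  have h2 := congrFun (ZMod.dft_dft (χ : ZMod q → ℂ)) (-1)
  rw [h1, ZMod.dft_const_mul] at h2
  beta_reduce at h2
  have h3 := congrFun (ZMod.dft_comp_neg (χ : ZMod q → ℂ)) (-1)
  rw [h3, h1] at h2
  simp [hodd] at h2
  have h4 : ‖gaussSum χ stdAddChar‖ * ‖gaussSum χ stdAddChar‖ = q := by
    rw [← norm_mul, ← norm_neg, h2]; simp
  rw [← h4, Real.sqrt_mul_self (norm_nonneg _)]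

open ZMod in
/-- Fourier inversion: a real primitive character as a combination of additive characters. -/
lemma char_eq_sum {q : ℕ} [NeZero q] {χ : DirichletCharacter ℂ q}
    (h : ∀ n : ZMod q, χ n = 0 ∨ χ n = 1 ∨ χ n = -1) (hp : χ.IsPrimitive) (n : ZMod q) :
    (q : ℂ) * χ n = gaussSum χ stdAddChar * ∑ k : ZMod q, stdAddChar (k * n) * χ (-k) := by
  have h1 : ZMod.dft χ = fun k => gaussSum χ stdAddChar * χ (-k) := by
    ext k
    rw [hp.fourierTransform_eq_inv_mul_gaussSum, inv_eq_self_of_real h, mul_comm]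
  have h2 := congrFun (ZMod.dft_dft (χ : ZMod q → ℂ)) (-n)
  rw [h1, ZMod.dft_const_mul] at h2
  simpa [ZMod.dft_apply, neg_neg] using h2.symm

/-- Jordan's inequality, symmetrized under `t ↦ 1 - t`. -/
lemma inv_sin_le {t : ℝ} (h0 : 0 < t) (h1 : t < 1) :
    1 / Real.sin (π * t) ≤ (1 / t + 1 / (1 - t)) / 2 := by
  have aux : ∀ u : ℝ, 0 < u → u ≤ 1 / 2 → 1 / Real.sin (π * u) ≤ (1 / u + 1 / (1 - u)) / 2 := by
    intro u hu hu2
    have h := Real.mul_le_sin (x := π * u) (by positivity) (by nlinarith [Real.pi_pos])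
    have e : 2 / π * (π * u) = 2 * u := by field_simp
    rw [e] at h
    calc 1 / Real.sin (π * u) ≤ 1 / (2 * u) := by gcongr
      _ = (1 / u + 0) / 2 := by field_simp; ring
      _ ≤ _ := by
        have : 0 ≤ 1 / (1 - u) := by apply div_nonneg <;> linarith
        gcongr
  rcases le_total t (1 / 2) with h | h
  · exact aux t h0 h
  · have := aux (1 - t) (by linarith) (by linarith)
    rw [show π * (1 - t) = π - π * t by ring, Real.sin_pi_sub, sub_sub_cancel] at this
    linarith

open ZMod in
lemma norm_geom_sum_le {q : ℕ} [NeZero q] {k : ℕ} (h0 : 0 < k) (hk : k < q) (N : ℕ) :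
    ‖∑ n ∈ Finset.Icc 1 N, (stdAddChar ((k : ZMod q) * (n : ZMod q)) : ℂ)‖
      ≤ q / 2 * (1 / (k : ℝ) + 1 / ((q - k : ℕ) : ℝ)) := by
  have hq : (0 : ℝ) < q := by exact_mod_cast h0.trans hk
  set w : ℂ := stdAddChar (k : ZMod q) with hw
  have hw1 : w = exp (Complex.I * (2 * π * k / q : ℝ)) := by
    rw [hw]
    have := ZMod.stdAddChar_coe (N := q) (k : ℤ)
    rw [Int.cast_natCast] at this
    rw [this]; congr 1; push_cast; ring
  have hnorm : ‖w‖ = 1 := by rw [hw1, mul_comm]; exact norm_exp_ofReal_mul_I _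
  have ht0 : (0 : ℝ) < k / q := by positivity
  have ht1 : (k : ℝ) / q < 1 := by rw [div_lt_one hq]; exact_mod_cast hk
  have hsin : 0 < Real.sin (π * (k / q)) :=
    Real.sin_pos_of_pos_of_lt_pi (by positivity) (by nlinarith [Real.pi_pos])
  have hw2 : ‖w - 1‖ = 2 * Real.sin (π * (k / q)) := by
    rw [hw1, norm_exp_I_mul_ofReal_sub_one, Real.norm_eq_abs, abs_of_nonneg]
    · congr 2; ring
    · rw [show 2 * π * k / q / 2 = π * (k / q) by ring]; positivity
  have hwne : w ≠ 1 := by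
    intro h
    rw [h] at hw2; simp at hw2; linarith
  have hsum : ∑ n ∈ Finset.Icc 1 N, (stdAddChar ((k : ZMod q) * (n : ZMod q)) : ℂ)
      = w * ((w ^ N - 1) / (w - 1)) := by
    rw [← geom_sum_eq hwne, Finset.mul_sum, ← Finset.Ico_add_one_right_eq_Icc, Finset.sum_Ico_eq_sum_range]
    refine Finset.sum_congr (by simp) fun i _ => ?_
    rw [mul_comm (k : ZMod q), ← nsmul_eq_mul, AddChar.map_nsmul_eq_pow]
    ring
  have hb := inv_sin_le ht0 ht1
  have hcast : ((q - k : ℕ) : ℝ) = q - k := by push_cast [hk.le]; ring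
  have hqk : (0 : ℝ) < q - k := by rw [sub_pos]; exact_mod_cast hk
  rw [hsum, norm_mul, norm_div, hnorm, hw2, one_mul]
  calc ‖w ^ N - 1‖ / (2 * Real.sin (π * (k / q))) ≤ 2 / (2 * Real.sin (π * (k / q))) := by
        gcongr
        calc _ ≤ ‖w ^ N‖ + ‖(1:ℂ)‖ := norm_sub_le _ _
          _ = 2 := by simp [hnorm]; norm_num
    _ = 1 / Real.sin (π * (k / q)) := by field_simp
    _ ≤ _ := hb
    _ = _ := by
      rw [hcast]
      have : (1 : ℝ) - k / q ≠ 0 := by linarith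
      have h0' : (k : ℝ) ≠ 0 := by positivity
      field_simp

open ZMod in
lemma polya_vinogradov {q : ℕ} [NeZero q] {χ : DirichletCharacter ℂ q}
    (h : ∀ n : ZMod q, χ n = 0 ∨ χ n = 1 ∨ χ n = -1) (hp : χ.IsPrimitive)
    (hodd : χ (-1) = -1) (N : ℕ) :
    ‖∑ n ∈ Finset.Icc 1 N, χ n‖ ≤ √q * (1 + Real.log q) := by
  have hq : 0 < q := NeZero.pos q
  have hqR : (0 : ℝ) < q := by exact_mod_cast hq
  have hq1 : q ≠ 1 := by
    rintro rfl
    have : (-1 : ZMod 1) = 1 := Subsingleton.elim _ _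
    rw [this, map_one] at hodd
    norm_num at hodd
  have h0 : χ 0 = 0 := by
    have : Fact (1 < q) := ⟨by omega⟩
    exact MulChar.map_zero χ
  have key : (q : ℂ) * ∑ n ∈ Finset.Icc 1 N, χ n = gaussSum χ stdAddChar *
      ∑ k ∈ Finset.Ico 1 q, χ (-(k : ZMod q)) *
        ∑ n ∈ Finset.Icc 1 N, (stdAddChar ((k : ZMod q) * (n : ZMod q)) : ℂ) := by
    have e1 : ∀ f : ZMod q → ℂ, f 0 = 0 → ∑ k : ZMod q, f k = ∑ k ∈ Finset.Ico 1 q, f k := by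
      intro f hf
      have : ∑ k : ZMod q, f k = ∑ k ∈ Finset.range q, f k := by
        refine (Finset.sum_bij (s := Finset.range q) (t := Finset.univ) (f := fun k : ℕ => f k) (g := f)
          (fun k _ => (k : ZMod q)) (fun _ _ => Finset.mem_univ _) ?_ ?_
          (fun _ _ => rfl)).symm
        · intro a ha b hb hab
          rw [Finset.mem_range] at ha hb
          have := congrArg ZMod.val hab
          rwa [ZMod.val_natCast_of_lt ha, ZMod.val_natCast_of_lt hb] at this
        · intro b _
          exact ⟨b.val, by simpa using ZMod.val_lt b, by simp⟩
      rw [this, Finset.range_eq_Ico, Finset.sum_eq_sum_Ico_succ_bot hq]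
      simp [hf]
    rw [Finset.mul_sum]
    simp_rw [char_eq_sum h hp]
    rw [← Finset.mul_sum, Finset.sum_comm, e1 _ (Finset.sum_eq_zero fun n _ => by rw [neg_zero, h0, mul_zero])]
    congr 1
    refine Finset.sum_congr rfl fun k _ => ?_
    rw [Finset.mul_sum]
    exact Finset.sum_congr rfl fun n _ => mul_comm _ _
  have hH : ∑ k ∈ Finset.Ico 1 q, (1 / (k : ℝ)) ≤ 1 + Real.log q := by
    have h1 := harmonic_le_one_add_log q
    have h2 : ((harmonic q : ℚ) : ℝ) = ∑ k ∈ Finset.Icc 1 q, 1 / (k : ℝ) := by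
      rw [harmonic_eq_sum_Icc]; push_cast; simp
    rw [h2] at h1
    refine le_trans (Finset.sum_le_sum_of_subset_of_nonneg ?_ (fun i _ _ => by positivity)) h1
    intro x; simp; omega
  have hH2 : ∑ k ∈ Finset.Ico 1 q, (1 / ((q - k : ℕ) : ℝ)) = ∑ k ∈ Finset.Ico 1 q, (1 / (k : ℝ)) := by
    have := Finset.sum_Ico_reflect (fun k : ℕ => 1 / (k : ℝ)) 1 (m := q) (n := q) (by omega)
    rw [this]; simp
  have hn : (q : ℝ) * ‖∑ n ∈ Finset.Icc 1 N, χ n‖ ≤ √q * (q * (1 + Real.log q)) := by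
    calc (q : ℝ) * ‖∑ n ∈ Finset.Icc 1 N, χ n‖ = ‖(q : ℂ) * ∑ n ∈ Finset.Icc 1 N, χ n‖ := by simp
      _ ≤ √q * ∑ k ∈ Finset.Ico 1 q, q / 2 * (1 / (k : ℝ) + 1 / ((q - k : ℕ) : ℝ)) := by
        rw [key, norm_mul, norm_gaussSum_of_real h hp hodd]
        gcongr
        refine (norm_sum_le _ _).trans (Finset.sum_le_sum fun k hk => ?_)
        rw [Finset.mem_Ico] at hk
        rw [norm_mul]
        have := norm_geom_sum_le (q := q) hk.1 hk.2 N
        calc _ ≤ 1 * _ := mul_le_mul_of_nonneg_right (χ.norm_le_one _) (norm_nonneg _)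
          _ ≤ _ := by rwa [one_mul]
      _ ≤ _ := by
        rw [← Finset.mul_sum, Finset.sum_add_distrib, hH2, ← two_mul, ← mul_assoc (_ / _),
          div_mul_cancel₀ _ (two_ne_zero (α := ℝ))]
        gcongr
  have : √q * (q * (1 + Real.log q)) = q * (√q * (1 + Real.log q)) := by ring
  rw [this] at hn
  exact le_of_mul_le_mul_left hn hqR

open Set Filter Topology

/-! ### Integral representation and size of the L-function -/

/-- The summatory function `∑_{1 ≤ k ≤ t} f k` of a sequence, as a function of a real variable. -/
def summ (f : ℕ → ℂ) (t : ℝ) : ℂ := ∑ k ∈ Finset.Icc 1 ⌊t⌋₊, f k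

lemma measurable_summ (f : ℕ → ℂ) : Measurable (summ f) :=
  (measurable_from_nat (f := fun n => ∑ k ∈ Finset.Icc 1 n, f k)).comp Nat.measurable_floor

lemma norm_summ_le {f : ℕ → ℂ} (hf : ∀ n, ‖f n‖ ≤ 1) {t : ℝ} (ht : 0 ≤ t) : ‖summ f t‖ ≤ t := by
  refine (norm_sum_le _ _).trans ((Finset.sum_le_sum fun k _ => hf k).trans ?_)
  simpa using Nat.floor_le ht

lemma sum_norm_isBigO {f : ℕ → ℂ} (hf : ∀ n, ‖f n‖ ≤ 1) :
    (fun n ↦ ∑ k ∈ Finset.Icc 1 n, ‖f k‖) =O[atTop] fun n ↦ (n : ℝ) ^ (1 : ℝ) := by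
  refine Asymptotics.isBigO_of_le _ fun n => ?_
  rw [Real.rpow_one, Real.norm_of_nonneg (Finset.sum_nonneg fun _ _ => norm_nonneg _)]
  refine (Finset.sum_le_sum fun k _ => hf k).trans ?_
  simp

/-- Partial summation bound for a Dirichlet series with coefficients in the unit disc. -/
lemma norm_LSeries_le {f : ℕ → ℂ} (hf : ∀ n, ‖f n‖ ≤ 1) {s : ℂ} (hs : 1 < s.re) :
    ‖LSeries f s‖ ≤ ‖s‖ / (s.re - 1) := by
  rw [LSeries_eq_mul_integral' f zero_le_one hs (sum_norm_isBigO hf), norm_mul, div_eq_mul_inv]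
  gcongr
  have h1 := integral_Ioi_rpow_of_lt (a := -s.re) (by linarith) (c := 1) one_pos
  have h2 : -(1 : ℝ) ^ (-s.re + 1) / (-s.re + 1) = (s.re - 1)⁻¹ := by
    rw [Real.one_rpow, neg_div, ← div_neg, one_div]; congr 1; ring
  rw [h2] at h1
  rw [← h1]
  refine norm_integral_le_of_norm_le (integrableOn_Ioi_rpow_of_lt (by linarith) one_pos) ?_
  refine (ae_restrict_iff' measurableSet_Ioi).mpr (ae_of_all _ fun t ht => ?_)
  have ht0 : (0 : ℝ) < t := zero_lt_one.trans ht
  rw [norm_mul, norm_cpow_eq_rpow_re_of_pos ht0]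
  calc _ ≤ t * t ^ (-(s + 1)).re := by
        gcongr; exact norm_summ_le hf ht0.le
    _ = t ^ (-s.re) := by
      rw [← Real.rpow_one_add' ht0.le (by simp; linarith)]; congr 1; simp

/-- The integral is the Mellin transform of a truncated summatory function, evaluated at `-s`; for a
bounded summatory function it is therefore holomorphic in `Re s > 0`. -/
lemma differentiableAt_integral {f : ℕ → ℂ} {B : ℝ} (hB : ∀ t, ‖summ f t‖ ≤ B) {s : ℂ}
    (hs : 0 < s.re) :
    DifferentiableAt ℂ (fun s : ℂ => ∫ t in Ioi (1 : ℝ), summ f t * (t : ℂ) ^ (-(s + 1))) s := by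
  have e : (fun s : ℂ => ∫ t in Ioi (1 : ℝ), summ f t * (t : ℂ) ^ (-(s + 1)))
      = (mellin (indicator (Ioi 1) (summ f))) ∘ (fun s => -s) := by
    ext s
    rw [Function.comp_apply, mellin, ← integral_indicator measurableSet_Ioi,
      ← integral_indicator measurableSet_Ioi]
    congr 1; ext t
    by_cases ht : t ∈ Ioi (1 : ℝ)
    · have ht' : t ∈ Ioi (0 : ℝ) := lt_trans (zero_lt_one (α := ℝ)) ht
      rw [indicator_of_mem ht, indicator_of_mem ht', indicator_of_mem ht, smul_eq_mul, mul_comm]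
      congr 2; ring
    · rw [indicator_of_notMem ht]
      by_cases ht' : t ∈ Ioi (0 : ℝ)
      · rw [indicator_of_mem ht', indicator_of_notMem ht, smul_zero]
      · rw [indicator_of_notMem ht']
  rw [e]
  refine DifferentiableAt.comp s ?_ differentiableAt_id.neg
  have hBn : ∀ t, ‖indicator (Ioi 1) (summ f) t‖ ≤ B := fun t =>
    (norm_indicator_le_norm_self _ _).trans (hB t)
  refine mellin_differentiableAt_of_isBigO_rpow (a := 0) (b := -s.re - 1) ?_ ?_ ?_ ?_ ?_
  · refine LocallyIntegrable.locallyIntegrableOn ?_ _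
    refine (locallyIntegrable_const B).mono
      (((measurable_summ f).indicator measurableSet_Ioi).aestronglyMeasurable) ?_
    exact ae_of_all _ fun t => (hBn t).trans (Real.le_norm_self _)
  · refine Asymptotics.IsBigO.of_bound B (Eventually.of_forall fun t => ?_)
    simpa using hBn t
  · simpa using hs
  · refine (Asymptotics.isBigO_zero _ _).congr' ?_ EventuallyEq.rfl
    have : Iio (1 : ℝ) ∈ 𝓝[>] (0 : ℝ) := mem_nhdsWithin_of_mem_nhds (Iio_mem_nhds one_pos)
    filter_upwards [this] with t ht
    rw [indicator_of_notMem]; exact not_lt.mpr (mem_Iio.mp ht).le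
  · simp

/-- Partial summation, valid for `Re s > 1`, extends to `Re s > 0` by analytic continuation. -/
lemma LFunction_eq_integral {q : ℕ} [NeZero q] {χ : DirichletCharacter ℂ q} (hχ : χ ≠ 1) {B : ℝ}
    (hB : ∀ t, ‖summ (fun n => χ n) t‖ ≤ B) {s : ℂ} (hs : 0 < s.re) :
    χ.LFunction s = s * ∫ t in Ioi (1 : ℝ), summ (fun n => χ n) t * (t : ℂ) ^ (-(s + 1)) := by
  have hopen : IsOpen {z : ℂ | 0 < z.re} := isOpen_lt continuous_const Complex.continuous_re
  have h1 : AnalyticOnNhd ℂ χ.LFunction {z : ℂ | 0 < z.re} :=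
    (DirichletCharacter.differentiable_LFunction hχ).differentiableOn.analyticOnNhd hopen
  have h2 : AnalyticOnNhd ℂ (fun s : ℂ => s * ∫ t in Ioi (1 : ℝ),
      summ (fun n => χ n) t * (t : ℂ) ^ (-(s + 1))) {z : ℂ | 0 < z.re} := by
    refine DifferentiableOn.analyticOnNhd (fun z hz => ?_) hopen
    exact (differentiableAt_id.mul (differentiableAt_integral hB hz)).differentiableWithinAt
  refine h1.eqOn_of_preconnected_of_eventuallyEq h2
    (convex_halfSpace_re_gt 0).isPreconnected (z₀ := 2) (by simp) ?_ hs
  have : {z : ℂ | 1 < z.re} ∈ 𝓝 (2 : ℂ) :=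
    (isOpen_lt continuous_const Complex.continuous_re).mem_nhds (by simp)
  filter_upwards [this] with z hz
  rw [DirichletCharacter.LFunction_eq_LSeries χ hz]
  exact LSeries_eq_mul_integral' _ zero_le_one hz (sum_norm_isBigO fun n => χ.norm_le_one _)

open ComplexConjugate in
lemma LFunction_conj {q : ℕ} [NeZero q] {χ : DirichletCharacter ℂ q} (hχ : χ ≠ 1)
    (h : ∀ n : ZMod q, χ n = 0 ∨ χ n = 1 ∨ χ n = -1) {B : ℝ}
    (hB : ∀ t, ‖summ (fun n => χ n) t‖ ≤ B) {s : ℂ} (hs : 0 < s.re) :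
    χ.LFunction (conj s) = conj (χ.LFunction s) := by
  rw [LFunction_eq_integral hχ hB hs, LFunction_eq_integral hχ hB (by simpa using hs), map_mul,
    ← integral_conj]
  congr 1
  refine setIntegral_congr_fun measurableSet_Ioi fun t ht => ?_
  have ht0 : (0 : ℝ) < t := zero_lt_one.trans ht
  have e1 : conj (summ (fun n => χ n) t) = summ (fun n => χ n) t := by
    rw [summ, map_sum]
    refine Finset.sum_congr rfl fun n _ => ?_
    rcases h n with h | h | h <;> rw [h] <;> simp
  have e2 : (t : ℂ) ^ (-(conj s + 1)) = conj ((t : ℂ) ^ (-(s + 1))) := by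
    have := cpow_conj (t : ℂ) (-(s + 1)) (by rw [arg_ofReal_of_nonneg ht0.le]; exact Real.pi_pos.ne)
    simpa using this
  simp only [map_mul, e1, e2]

/-- Convexity-type bound in `1/2 ≤ Re s ≤ 1`: the summatory function is at most `t` for `t ≤ B` and at
most `B` beyond, so the integral is split at `B`. -/
lemma norm_LFunction_le {q : ℕ} [NeZero q] {χ : DirichletCharacter ℂ q} (hχ : χ ≠ 1) {B : ℝ}
    (hB1 : 1 ≤ B) (hB : ∀ t, ‖summ (fun n => χ n) t‖ ≤ B) {s : ℂ} (hs : 1 / 2 ≤ s.re)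
    (hs1 : s.re ≤ 1) :
    ‖χ.LFunction s‖ ≤ ‖s‖ * ((Real.log B + 2) * B ^ (1 - s.re)) := by
  have hs0 : 0 < s.re := by linarith
  have hB0 : 0 < B := by linarith
  rw [LFunction_eq_integral hχ hB hs0, norm_mul]
  gcongr
  set g : ℝ → ℂ := fun t => summ (fun n => χ n) t * (t : ℂ) ^ (-(s + 1)) with hg
  have hgn : ∀ t : ℝ, 0 < t → ‖g t‖ = ‖summ (fun n => χ n) t‖ * t ^ (-s.re - 1) := by
    intro t ht
    rw [hg]; beta_reduce
    rw [norm_mul, norm_cpow_eq_rpow_re_of_pos ht]; congr 2; simp; ring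
  have hb2 : ∀ t : ℝ, 0 < t → ‖g t‖ ≤ B * t ^ (-s.re - 1) := by
    intro t ht; rw [hgn t ht]; gcongr; exact hB t
  have hb1 : ∀ t : ℝ, 0 < t → t ≤ B → ‖g t‖ ≤ B ^ (1 - s.re) * t⁻¹ := by
    intro t ht htB; rw [hgn t ht]
    calc _ ≤ t * t ^ (-s.re - 1) := by gcongr; exact norm_summ_le (fun n => χ.norm_le_one _) ht.le
      _ = t ^ (1 - s.re) * t⁻¹ := by
        rw [← Real.rpow_neg_one t, ← Real.rpow_add ht, ← Real.rpow_one_add' ht.le (by linarith)]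
        congr 1; ring
      _ ≤ _ := by gcongr
  have hgm : Measurable g := (measurable_summ _).mul
    (measurable_ofReal.pow_const _)
  have hgi : ∀ c : ℝ, 0 < c → IntegrableOn g (Ioi c) := by
    intro c hc
    refine Integrable.mono' ((integrableOn_Ioi_rpow_of_lt (a := -s.re - 1) (by linarith) hc).const_mul B)
      hgm.aestronglyMeasurable ?_
    exact (ae_restrict_iff' measurableSet_Ioi).mpr (ae_of_all _ fun t ht => hb2 t (hc.trans ht))
  rw [← Ioc_union_Ioi_eq_Ioi hB1, setIntegral_union (Ioc_disjoint_Ioi le_rfl) measurableSet_Ioi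
    ((hgi 1 one_pos).mono_set Ioc_subset_Ioi_self) (hgi B hB0)]
  refine (norm_add_le _ _).trans ?_
  have i1 : ‖∫ t in Ioc 1 B, g t‖ ≤ B ^ (1 - s.re) * Real.log B := by
    have e : ∫ t in Ioc 1 B, B ^ (1 - s.re) * t⁻¹ = B ^ (1 - s.re) * Real.log B := by
      rw [← intervalIntegral.integral_of_le hB1, intervalIntegral.integral_const_mul,
        integral_inv_of_pos one_pos hB0, div_one]
    rw [← e]
    refine norm_integral_le_of_norm_le ?_ ?_
    · have : IntervalIntegrable (fun t : ℝ => B ^ (1 - s.re) * t⁻¹) volume 1 B := by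
        refine (intervalIntegral.intervalIntegrable_inv (fun x hx => ?_) continuousOn_id).const_mul _
        rw [uIcc_of_le hB1] at hx
        exact (zero_lt_one.trans_le hx.1).ne'
      rwa [intervalIntegrable_iff_integrableOn_Ioc_of_le hB1] at this
    · exact (ae_restrict_iff' measurableSet_Ioc).mpr
        (ae_of_all _ fun t ht => hb1 t (zero_lt_one.trans ht.1) ht.2)
  have i2 : ‖∫ t in Ioi B, g t‖ ≤ 2 * B ^ (1 - s.re) := by
    have e : ∫ t in Ioi B, B * t ^ (-s.re - 1) = B ^ (1 - s.re) / s.re := by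
      rw [integral_const_mul, integral_Ioi_rpow_of_lt (by linarith) hB0]
      rw [sub_add_cancel, neg_div_neg_eq, ← mul_div_assoc, sub_eq_add_neg,
        Real.rpow_add hB0, Real.rpow_one]
    calc _ ≤ B ^ (1 - s.re) / s.re := by
          rw [← e]
          exact norm_integral_le_of_norm_le
            ((integrableOn_Ioi_rpow_of_lt (by linarith) hB0).const_mul B)
            ((ae_restrict_iff' measurableSet_Ioi).mpr (ae_of_all _ fun t ht => hb2 t (hB0.trans ht)))
      _ ≤ B ^ (1 - s.re) / (1 / 2) := by gcongr
      _ = _ := by ring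
  linarith

open scoped ArithmeticFunction.Moebius in
/-- The inverse `1 / L(s, χ)` is the Dirichlet series with coefficients `χ(n) μ(n)`, all of norm at
most `1`. -/
lemma norm_inv_LFunction_le {q : ℕ} [NeZero q] (χ : DirichletCharacter ℂ q) {s : ℂ}
    (hs : 1 < s.re) : ‖(χ.LFunction s)⁻¹‖ ≤ ‖s‖ / (s.re - 1) := by
  rw [DirichletCharacter.LFunction_eq_LSeries χ hs,
    inv_eq_of_mul_eq_one_right (DirichletCharacter.LSeries.mul_mu_eq_one χ hs)]
  refine norm_LSeries_le (fun n => ?_) hs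
  rw [Pi.mul_apply, norm_mul]
  refine mul_le_one₀ (χ.norm_le_one _) (norm_nonneg _) ?_
  rw [Complex.norm_intCast]
  exact_mod_cast ArithmeticFunction.abs_moebius_le_one

/-! ### The maximum principle on a half-disc -/

lemma deriv_re_nonneg_of_le_left {F : ℂ → ℂ} {F' : ℂ} (hF : HasDerivAt F F' 0) (h0 : F 0 = 1)
    (hle : ∀ x : ℝ, -(1 / 2) < x → x < 0 → ‖F x‖ ≤ 1) : 0 ≤ F'.re := by
  have hF1 : HasDerivAt F F' ((0 : ℝ) : ℂ) := by simpa using hF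
  have h1 : HasDerivAt (fun x : ℝ => (F x).re) F'.re 0 := hF1.real_of_complex
  have h2 := (hasDerivAt_iff_tendsto_slope_left_right.mp h1).1
  refine ge_of_tendsto h2 ?_
  have : Ioi (-(1 / 2) : ℝ) ∈ 𝓝[<] (0 : ℝ) :=
    mem_nhdsWithin_of_mem_nhds (Ioi_mem_nhds (by norm_num))
  filter_upwards [this, self_mem_nhdsWithin] with x hx hx0
  rw [mem_Iio] at hx0
  rw [slope_def_field, ofReal_zero, h0, one_re, sub_zero]
  refine div_nonneg_of_nonpos ?_ hx0.le
  linarith [(re_le_norm (F x)).trans (hle x hx hx0)]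

/-- The product of the bounds for the four factors of the auxiliary function at a point of the arc
with real part `-x`. -/
lemma arc_bound {l δ x : ℝ} (hl : 0 ≤ l) (hδ : 0 < δ) (h : 288 * (l + 2) ≤ δ ^ 2) (hx : 0 < x) :
    3 / 2 * ((l + 2) * Real.exp (l * x)) * (3 / 2 / x) * (4 * x) ^ 3 * Real.exp (-(l + δ) * x)
      ≤ 1 := by
  have h1 := Real.quadratic_le_exp_of_nonneg (mul_pos hδ hx).le
  have h2 : Real.exp (-(l + δ) * x) = (Real.exp (l * x))⁻¹ * (Real.exp (δ * x))⁻¹ := by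
    rw [← Real.exp_neg, ← Real.exp_neg, ← Real.exp_add]; congr 1; ring
  rw [h2]
  have e : 3 / 2 * ((l + 2) * Real.exp (l * x)) * (3 / 2 / x) * (4 * x) ^ 3 *
      ((Real.exp (l * x))⁻¹ * (Real.exp (δ * x))⁻¹) = 144 * (l + 2) * x ^ 2 / Real.exp (δ * x) := by
    field_simp; ring
  rw [e, div_le_one (Real.exp_pos _)]
  nlinarith [mul_le_mul_of_nonneg_right h (sq_nonneg x), mul_pos hδ hx]

open ComplexConjugate in
/-- Lower bound for `Re (f' / f)` at `1`, for an entire function `f` that commutes with conjugation,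
does not vanish on `Re s ≥ 1`, and satisfies `|f(s)| ≪ (l + 2) exp (l (1 - Re s))` to the left of
`Re s = 1` and `|1 / f(s)| ≪ 1 / (Re s - 1)` to the right. -/
lemma neg_le_logDeriv_re {f : ℂ → ℂ} (hf : Differentiable ℂ f) (hne : ∀ s, 1 ≤ s.re → f s ≠ 0)
    (hconj : ∀ s, 0 < s.re → f (conj s) = conj (f s)) {l δ : ℝ} (hl : 0 ≤ l) (hδ : 0 < δ)
    (hlδ : 288 * (l + 2) ≤ δ ^ 2)
    (hup : ∀ s, 1 / 2 ≤ s.re → s.re ≤ 1 → ‖f s‖ ≤ ‖s‖ * ((l + 2) * Real.exp (l * (1 - s.re))))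
    (hlow : ∀ s, 1 < s.re → ‖(f s)⁻¹‖ ≤ ‖s‖ / (s.re - 1)) :
    -((l + δ) / 2) ≤ (deriv f 1 / f 1).re := by
  set A : ℝ := l + δ with hA
  set F : ℂ → ℂ := fun z => f (1 + z) * (f (1 - z))⁻¹ * (1 + 4 * z ^ 2) ^ 3 * exp (A * z) with hF
  have hf1 : f 1 ≠ 0 := hne 1 (by simp)
  have hdiff : ∀ z : ℂ, z.re ≤ 0 → DifferentiableAt ℂ F z := by
    intro z hz
    have hz' : f (1 - z) ≠ 0 := hne _ (by simpa using hz)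
    have d1 : DifferentiableAt ℂ (fun z => f (1 + z)) z :=
      (hf (1 + z)).comp z (by fun_prop)
    have d2 : DifferentiableAt ℂ (fun z => f (1 - z)) z :=
      (hf (1 - z)).comp z (by fun_prop)
    exact ((d1.mul (d2.inv hz')).mul (by fun_prop)).mul (by fun_prop)
  have hF0 : F 0 = 1 := by simp [hF, hf1]
  have hderiv : HasDerivAt F (2 * (deriv f 1 / f 1) + A) 0 := by
    have d1 : HasDerivAt (fun z => f (1 + z)) (deriv f 1) 0 := by
      have := (hf (1 + 0)).hasDerivAt.comp_const_add (1 : ℂ) 0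
      simpa using this
    have d2 : HasDerivAt (fun z => f (1 - z)) (-deriv f 1) 0 := by
      have := (hf (1 - 0)).hasDerivAt.comp_const_sub (1 : ℂ) 0
      simpa using this
    have d3 : HasDerivAt (fun z : ℂ => (1 + 4 * z ^ 2) ^ 3) 0 0 := by
      have := ((((hasDerivAt_id (0 : ℂ)).pow 2).const_mul 4).const_add 1).pow 3
      exact this.congr_deriv (by simp)
    have d4 : HasDerivAt (fun z : ℂ => exp (A * z)) A 0 := by
      have := ((hasDerivAt_id (0 : ℂ)).const_mul (A : ℂ)).cexp
      simpa using this
    have := ((d1.mul (d2.inv (by simpa using hf1))).mul d3).mul d4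
    refine this.congr_deriv ?_
    simp
    field_simp
    ring
  set U : Set ℂ := Metric.ball 0 (1 / 2) ∩ {z | z.re < 0} with hU
  have hUo : IsOpen U := Metric.isOpen_ball.inter (isOpen_lt Complex.continuous_re continuous_const)
  have hcl : closure U ⊆ Metric.closedBall 0 (1 / 2) ∩ {z | z.re ≤ 0} := by
    refine closure_minimal (inter_subset_inter Metric.ball_subset_closedBall fun z hz => ?_) ?_
    · exact le_of_lt (show z.re < 0 from hz)
    · exact Metric.isClosed_closedBall.inter (isClosed_le Complex.continuous_re continuous_const)
  have hbd : ∀ z ∈ frontier U, ‖F z‖ ≤ 1 := by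
    intro z hz
    rw [hUo.frontier_eq] at hz
    obtain ⟨hzb, hzr⟩ := hcl hz.1
    have hzn : ‖z‖ ≤ 1 / 2 := by simpa using hzb
    have hzr : z.re ≤ 0 := hzr
    have hnF : ‖F z‖ = ‖f (1 + z)‖ * ‖(f (1 - z))⁻¹‖ * ‖1 + 4 * z ^ 2‖ ^ 3 * Real.exp (A * z.re) := by
      simp only [hF, norm_mul, norm_pow, norm_exp, re_ofReal_mul]
    -- Either `z` is on the imaginary axis, where `|f (1 + z)| = |f (1 - z)|`, or it is on the arc.
    rcases hzr.eq_or_lt with h0 | h0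
    · have hcz : conj (1 + z) = 1 - z := by
        apply Complex.ext <;> simp [h0]
      have hc : ‖f (1 - z)‖ = ‖f (1 + z)‖ := by
        rw [← hcz, hconj _ (by simp [h0]), Complex.norm_conj]
      have hz2 : 1 + 4 * z ^ 2 = ((1 - 4 * z.im ^ 2 : ℝ) : ℂ) := by
        apply Complex.ext <;> simp [h0, pow_two]; ring
      have him : z.im ^ 2 ≤ 1 / 4 := by
        have := (abs_im_le_norm z).trans hzn
        rw [← sq_abs]; nlinarith [abs_nonneg z.im]
      have hne' : ‖f (1 + z)‖ ≠ 0 := norm_ne_zero_iff.mpr (hne _ (by simp [h0]))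
      rw [hnF, norm_inv, hc, mul_inv_cancel₀ hne', hz2, Complex.norm_real, Real.norm_eq_abs,
        abs_of_nonneg (by linarith), h0, mul_zero, Real.exp_zero, one_mul, mul_one]
      exact pow_le_one₀ (by linarith) (by nlinarith)
    · have hz1 : ‖z‖ = 1 / 2 := by
        by_contra hcon
        exact hz.2 ⟨by simpa using lt_of_le_of_ne hzn hcon, h0⟩
      have hre : -z.re ≤ 1 / 2 := by
        have := (abs_re_le_norm z).trans hzn
        rwa [abs_of_neg h0] at this
      have n1 : ‖1 + z‖ ≤ 3 / 2 := (norm_add_le _ _).trans (by rw [hz1]; norm_num)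
      have n2 : ‖1 - z‖ ≤ 3 / 2 := (norm_sub_le _ _).trans (by rw [hz1]; norm_num)
      have b1 : ‖f (1 + z)‖ ≤ 3 / 2 * ((l + 2) * Real.exp (l * (-z.re))) := by
        refine (hup (1 + z) (by simp; linarith) (by simp; linarith)).trans ?_
        have : 1 - (1 + z).re = -z.re := by simp
        rw [this]; gcongr
      have b2 : ‖(f (1 - z))⁻¹‖ ≤ 3 / 2 / (-z.re) := by
        refine (hlow (1 - z) (by simp; linarith)).trans ?_
        have : (1 - z).re - 1 = -z.re := by simp
        rw [this]
        have : 0 < -z.re := by linarith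
        gcongr
      -- On the arc `1 = 4 z z̄`, whence `1 + 4 z² = 4 z (z + z̄)`.
      have b3 : ‖1 + 4 * z ^ 2‖ = 4 * (-z.re) := by
        have hzz : z * conj z = 1 / 4 := by
          rw [mul_conj, normSq_eq_norm_sq, hz1]; norm_num
        have : 1 + 4 * z ^ 2 = 4 * z * ((2 * z.re : ℝ) : ℂ) := by
          rw [← add_conj]; linear_combination -4 * hzz
        rw [this, norm_mul, norm_mul, hz1, Complex.norm_real, Real.norm_eq_abs,
          abs_of_neg (by linarith)]
        norm_num; ring
      rw [hnF, b3]
      refine le_trans ?_ (arc_bound hl hδ hlδ (x := -z.re) (by linarith))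
      have : 0 < -z.re := by linarith
      rw [show A * z.re = -(l + δ) * -z.re by rw [hA]; ring]
      gcongr
  have hmax : ∀ x : ℝ, -(1 / 2) < x → x < 0 → ‖F x‖ ≤ 1 := by
    intro x hx hx0
    refine norm_le_of_forall_mem_frontier_norm_le (Metric.isBounded_ball.subset inter_subset_left)
      (DifferentiableOn.diffContOnCl fun z hz => (hdiff z (hcl hz).2).differentiableWithinAt) hbd
      (subset_closure ⟨?_, by simpa using hx0⟩)
    simpa [abs_of_neg hx0] using by linarith
  have := deriv_re_nonneg_of_le_left hderiv hF0 hmax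
  simp at this
  rw [div_re]
  rw [div_re] at this
  linarith

/-! ### Application to real odd characters -/

/-- The quotient of real parts is the logarithmic derivative at `1`, as `L(1, χ)` is real. -/
lemma neg_le_LFunction_logDeriv {q : ℕ} [NeZero q] {χ : DirichletCharacter ℂ q}
    (h : ∀ n : ZMod q, χ n = 0 ∨ χ n = 1 ∨ χ n = -1) (hp : χ.IsPrimitive)
    (hodd : χ (-1) = -1) {δ : ℝ} (hδ : 0 < δ)
    (hqδ : 288 * (Real.log q / 2 + Real.log (1 + Real.log q) + 2) ≤ δ ^ 2) :
    -((Real.log q / 2 + Real.log (1 + Real.log q) + δ) / 2)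
      ≤ (deriv χ.LFunction 1).re / (χ.LFunction 1).re := by
  have hq : (1 : ℝ) ≤ q := by exact_mod_cast NeZero.pos q
  have hlq : 0 ≤ Real.log q := Real.log_nonneg hq
  have hχ : χ ≠ 1 := by
    rintro rfl
    rw [MulChar.one_apply (isUnit_one.neg)] at hodd
    norm_num at hodd
  set B : ℝ := √q * (1 + Real.log q) with hBdef
  have hsq : 1 ≤ √(q : ℝ) := Real.one_le_sqrt.mpr hq
  have hB1 : 1 ≤ B := one_le_mul_of_one_le_of_one_le hsq (by linarith)
  have hB : ∀ t, ‖summ (fun n => χ n) t‖ ≤ B := fun t => polya_vinogradov h hp hodd _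
  have hlB : Real.log B = Real.log q / 2 + Real.log (1 + Real.log q) := by
    rw [hBdef, Real.log_mul (by positivity) (by positivity), Real.log_sqrt (by linarith)]
  rw [← hlB] at hqδ ⊢
  have hconj := fun (s : ℂ) (hs : 0 < s.re) => LFunction_conj hχ h hB hs
  have key := neg_le_logDeriv_re (DirichletCharacter.differentiable_LFunction hχ)
    (fun s hs => DirichletCharacter.LFunction_ne_zero_of_one_le_re χ (Or.inl hχ) hs)
    hconj (Real.log_nonneg hB1) hδ hqδ
    (fun s hs hs1 => by
      rw [← Real.rpow_def_of_pos (by linarith)]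
      exact norm_LFunction_le hχ hB1 hB hs hs1)
    (fun s hs => norm_inv_LFunction_le χ hs)
  have him : ((χ.LFunction 1).re : ℂ) = χ.LFunction 1 := by
    rw [← conj_eq_iff_re]
    have := hconj 1 (by simp)
    rw [← this, map_one]
  rwa [← him, div_ofReal_re] at key

lemma eventually_log_bounds {ε : ℝ} (hε : 0 < ε) : ∀ᶠ x : ℝ in atTop,
    0 < Real.log x ∧ Real.log (1 + Real.log x) ≤ ε * Real.log x ∧
      288 * (Real.log x / 2 + ε * Real.log x + 2) ≤ (ε * Real.log x) ^ 2 := by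
  suffices ∀ᶠ y : ℝ in atTop, 0 < y ∧ Real.log (1 + y) ≤ ε * y ∧
      288 * (y / 2 + ε * y + 2) ≤ (ε * y) ^ 2 from Real.tendsto_log_atTop.eventually this
  have h1 : ∀ᶠ y : ℝ in atTop, Real.log (1 + y) ≤ ε / 2 * (1 + y) := by
    have := (tendsto_atTop_add_const_left atTop (1 : ℝ) tendsto_id).eventually
      (Real.isLittleO_log_id_atTop.bound (half_pos hε))
    filter_upwards [this, eventually_gt_atTop 0] with y hy hy0
    have h := (Real.le_norm_self _).trans hy
    simp only [id] at h
    rwa [Real.norm_of_nonneg (by linarith)] at h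
  filter_upwards [h1, eventually_ge_atTop 1, eventually_ge_atTop (288 * (3 + ε) / ε ^ 2)]
    with y hy hy1 hy2
  refine ⟨by linarith, by nlinarith, ?_⟩
  rw [div_le_iff₀ (by positivity)] at hy2
  nlinarith [mul_le_mul_of_nonneg_right hy2 (by linarith : (0 : ℝ) ≤ y)]

theorem thm3 :
    ∀ ε : ℝ, 0 < ε → ∃ X : ℝ, 0 < X ∧
      ∀ D : ℤ, IsFundamentalNegDiscriminant D → X ≤ (Int.natAbs D : ℝ) →
      ∀ [NeZero (Int.natAbs D)],
      ∀ χD : DirichletCharacter ℂ (Int.natAbs D), IsKroneckerChar D χD →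
        (deriv χD.LFunction 1).re /
            (Real.log (Int.natAbs D) * (χD.LFunction 1).re) ≥ -(1 / 4) - ε := by
  intro ε hε
  obtain ⟨X, hX⟩ := eventually_atTop.mp (eventually_log_bounds hε)
  refine ⟨max X 1, by positivity, fun D _ hD _ χ ⟨h, hp, hodd⟩ => ?_⟩
  obtain ⟨h1, h2, h3⟩ := hX _ ((le_max_left _ _).trans hD)
  have key := neg_le_LFunction_logDeriv h hp hodd (mul_pos hε h1) (by linarith)
  rw [ge_iff_le, mul_comm, ← div_div, le_div_iff₀ h1]
  linarith

end
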